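/- Let a > 0. For each m > 0 there exists a unique α(a,m) > 0 such that inf_{ξ∈ℝ} μ₁(a,m,α(a,m);ξ) = 0. Moreover α(a,m) = 1 if m ≤ 1, and Θ₀ < α(a,m) < 1 if m > 1, where Θ₀ = Θ(0) ∈ (0,1) is the de Gennes constant. -/

import Mathlib

/-!
Each quotient in the definition of `μ₁(a,m,α;ξ)` is affine in `α`, so
`α ↦ inf_ξ μ₁(a,m,α;ξ)` is concave. Hence it is continuous and, being positive at `α = 0` by the
harmonic oscillator bound, it vanishes at most once on `(0,∞)`.

Everything else comes from completing the square: integrating `(u' + f u)²` over a half-line for a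
multiplier `f` produces the energy with potential `f² - f'` and a boundary term `f(0) u(0)²`. For
`f = t - ξ` the boundary terms of the two half-lines cancel, which gives the oscillator bound, with
equality for the Gaussian centred at `ξ`; a bounded nonnegative `f` gives `Θ₀ > 0`. The energy of
that Gaussian shows that the infimum at `α = 1` is nonpositive, and negative if `m > 1`. The
matching lower bounds, nonnegativity at `α = 1` if `m ≤ 1` and positivity at `α = Θ₀` if `m > 1`,
combine the oscillator bound with the definition of `Θ₀`.
-/

open MeasureTheory Set Filter Topology

noncomputable section

/-- `B¹(ℝ₊)`-type regularity on the half line (smooth core):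
`u`, `u'` and `t·u` are square integrable on `(0,∞)`. -/
def MemB1p (u : ℝ → ℝ) : Prop :=
  Differentiable ℝ u ∧
  IntegrableOn (fun t => (u t)^2) (Ioi 0) ∧
  IntegrableOn (fun t => (deriv u t)^2) (Ioi 0) ∧
  IntegrableOn (fun t => t^2 * (u t)^2) (Ioi 0)

/-- The Robin quadratic form `q[γ,ξ]` of `-d²/dt² + (t-ξ)²` on `ℝ₊`. -/
def qRobin (γ ξ : ℝ) (u : ℝ → ℝ) : ℝ :=
  (∫ t in Ioi (0:ℝ), ((deriv u t)^2 + (t - ξ)^2 * (u t)^2)) + γ * (u 0)^2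

/-- squared `L²(ℝ₊)` norm. -/
def np (u : ℝ → ℝ) : ℝ := ∫ t in Ioi (0:ℝ), (u t)^2

/-- Lowest Robin eigenvalue `λ₁(γ,ξ)`, defined variationally. -/
def lambda1 (γ ξ : ℝ) : ℝ :=
  sInf {r : ℝ | ∃ u : ℝ → ℝ, MemB1p u ∧ np u ≠ 0 ∧ r = qRobin γ ξ u / np u}

/-- Lowest Neumann eigenvalue `λ₁^N(ξ)` (Robin with `γ = 0`). -/
def lambda1N (ξ : ℝ) : ℝ := lambda1 0 ξ

/-- Lowest Dirichlet eigenvalue `λ₁^D(ξ)`, defined variationally. -/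
def lambda1D (ξ : ℝ) : ℝ :=
  sInf {r : ℝ | ∃ u : ℝ → ℝ, MemB1p u ∧ u 0 = 0 ∧ np u ≠ 0 ∧ r = qRobin 0 ξ u / np u}

/-- The de Gennes constant `Θ₀ = inf_ξ λ₁^N(ξ)`. -/
def Theta0 : ℝ := sInf (Set.range lambda1N)

/-- `B¹(ℝ)`-type regularity on the whole line (smooth core). -/
def MemB1 (u : ℝ → ℝ) : Prop :=
  Differentiable ℝ u ∧
  Integrable (fun t => (u t)^2) ∧
  Integrable (fun t => (deriv u t)^2) ∧
  Integrable (fun t => t^2 * (u t)^2)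

/-- The interface quadratic form `Q[a,m,α;ξ]` on `B¹(ℝ)`. -/
def QI (a m α ξ : ℝ) (u : ℝ → ℝ) : ℝ :=
  (∫ t in Ioi (0:ℝ), ((deriv u t)^2 + (t - ξ)^2 * (u t)^2 - α * (u t)^2)) +
  ∫ t in Iio (0:ℝ), ((1/m) * ((deriv u t)^2 + (t - ξ)^2 * (u t)^2) + a * α * (u t)^2)

/-- squared `L²(ℝ)` norm. -/
def nR (u : ℝ → ℝ) : ℝ := ∫ t, (u t)^2

/-- Ground state energy `μ₁(a,m,α;ξ)` of the interface operator, defined variationally. -/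
def mu1 (a m α ξ : ℝ) : ℝ :=
  sInf {r : ℝ | ∃ u : ℝ → ℝ, MemB1 u ∧ nR u ≠ 0 ∧ r = QI a m α ξ u / nR u}

section Rayleigh

variable {V : Type*} {P : V → Prop} {N : V → ℝ}

/-- The infimum of the Rayleigh quotient `Q v / N v` over the `v` satisfying `P` with `N v ≠ 0`.
It specializes to `lambda1` and `mu1`. -/
def rayleighInf (P : V → Prop) (N Q : V → ℝ) : ℝ :=
  sInf {r : ℝ | ∃ v, P v ∧ N v ≠ 0 ∧ r = Q v / N v}

lemma le_rayleighInf_iff {Q : V → ℝ} {b c : ℝ} (hN : ∀ v, 0 ≤ N v) (hne : ∃ v, P v ∧ N v ≠ 0)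
    (hb : ∀ v, P v → b * N v ≤ Q v) :
    c ≤ rayleighInf P N Q ↔ ∀ v, P v → c * N v ≤ Q v := by
  have quotient_bound {d : ℝ} {v : V} (hv : N v ≠ 0) : d ≤ Q v / N v ↔ d * N v ≤ Q v :=
    le_div_iff₀ ((hN v).lt_of_ne' hv)
  have bddBelow : BddBelow {r : ℝ | ∃ v, P v ∧ N v ≠ 0 ∧ r = Q v / N v} := by
    refine ⟨b, ?_⟩
    rintro _ ⟨v, hv, hv0, rfl⟩
    exact (quotient_bound hv0).2 (hb v hv)
  have nonempty : {r : ℝ | ∃ v, P v ∧ N v ≠ 0 ∧ r = Q v / N v}.Nonempty := by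
    obtain ⟨v, hv, hv0⟩ := hne
    exact ⟨_, v, hv, hv0, rfl⟩
  rw [rayleighInf, le_csInf_iff bddBelow nonempty]
  constructor
  · intro h v hv
    by_cases hv0 : N v = 0
    · simpa [hv0] using hb v hv
    · exact (quotient_bound hv0).1 (h _ ⟨v, hv, hv0, rfl⟩)
  · rintro h _ ⟨v, hv, hv0, rfl⟩
    exact (quotient_bound hv0).2 (h v hv)

lemma le_sInf_range_rayleighInf_iff {ι : Type*} [Nonempty ι] {Q : ι → V → ℝ} {b c : ℝ}
    (hN : ∀ v, 0 ≤ N v) (hne : ∃ v, P v ∧ N v ≠ 0) (hb : ∀ i v, P v → b * N v ≤ Q i v) :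
    c ≤ sInf (range fun i => rayleighInf P N (Q i)) ↔ ∀ i v, P v → c * N v ≤ Q i v := by
  have bddBelow : BddBelow (range fun i => rayleighInf P N (Q i)) := by
    refine ⟨b, ?_⟩
    rintro _ ⟨i, rfl⟩
    exact (le_rayleighInf_iff hN hne (hb i)).2 (hb i)
  rw [sInf_range, le_ciInf_iff bddBelow]
  exact forall_congr' fun i => le_rayleighInf_iff hN hne (hb i)

end Rayleigh

lemma eq_of_concaveOn_of_eq_zero {f : ℝ → ℝ} {x y : ℝ} (hf : ConcaveOn ℝ (Ici 0) f)
    (h0 : 0 < f 0) (hx : 0 < x) (hy : 0 < y) (hfx : f x = 0) (hfy : f y = 0) : x = y := by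
  have no_later_zero {s t : ℝ} (hs : 0 < s) (hfs : f s = 0) (hft : f t = 0) : ¬ s < t := by
    intro hst
    have hmem : s ∈ openSegment ℝ 0 t := by
      rw [openSegment_eq_Ioo (hs.trans hst)]
      exact ⟨hs, hst⟩
    have := hf.lt_right_of_left_lt self_mem_Ici (hs.trans hst).le hmem (hfs.trans_lt h0)
    exact this.ne (hft.trans hfs.symm)
  exact le_antisymm (le_of_not_gt (no_later_zero hy hfy hfx))
    (le_of_not_gt (no_later_zero hx hfx hfy))

section CompletingTheSquare

variable {μ : Measure ℝ} {f f' u : ℝ → ℝ}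

lemma integrable_sub_sq_mul_sq {ξ η : ℝ} (hu : Continuous u)
    (hu2 : Integrable (fun t => u t ^ 2) μ) (hξ : Integrable (fun t => (t - ξ) ^ 2 * u t ^ 2) μ) :
    Integrable (fun t => (t - η) ^ 2 * u t ^ 2) μ := by
  refine ((hξ.const_mul 2).add (hu2.const_mul (2 * (ξ - η) ^ 2))).mono' (by fun_prop)
    (Eventually.of_forall fun t => ?_)
  rw [Real.norm_of_nonneg (by positivity), Pi.add_apply]
  have : (t - η) ^ 2 ≤ 2 * (t - ξ) ^ 2 + 2 * (ξ - η) ^ 2 := by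
    nlinarith [sq_nonneg ((t - ξ) - (ξ - η))]
  nlinarith [mul_le_mul_of_nonneg_right this (sq_nonneg (u t))]

lemma integrable_sub_sq_mul_sq_of_sq_mul_sq (hu : Continuous u)
    (hu2 : Integrable (fun t => u t ^ 2) μ) (htu : Integrable (fun t => t ^ 2 * u t ^ 2) μ)
    (ξ : ℝ) : Integrable (fun t => (t - ξ) ^ 2 * u t ^ 2) μ :=
  integrable_sub_sq_mul_sq (ξ := 0) hu hu2 (by simpa only [sub_zero] using htu)

lemma integrable_mul_sq (hf : Continuous f) (hu : Continuous u)
    (hu2 : Integrable (fun t => u t ^ 2) μ) (hfu : Integrable (fun t => f t ^ 2 * u t ^ 2) μ) :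
    Integrable (fun t => f t * u t ^ 2) μ := by
  refine (hfu.add hu2).mono' (by fun_prop) (Eventually.of_forall fun t => ?_)
  rw [norm_mul, Real.norm_eq_abs, Real.norm_of_nonneg (sq_nonneg (u t)), Pi.add_apply]
  have : |f t| ≤ f t ^ 2 + 1 := by nlinarith [sq_abs (f t), sq_nonneg (|f t| - 1), abs_nonneg (f t)]
  nlinarith [mul_le_mul_of_nonneg_right this (sq_nonneg (u t))]

lemma integrable_mul_two_mul_mul_deriv (hf : Continuous f) (hu : Continuous u)
    (hu' : Integrable (fun t => deriv u t ^ 2) μ)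
    (hfu : Integrable (fun t => f t ^ 2 * u t ^ 2) μ) :
    Integrable (fun t => f t * (2 * u t * deriv u t)) μ := by
  have := (measurable_deriv u).aestronglyMeasurable (μ := μ)
  refine (hu'.add hfu).mono' (by fun_prop) (Eventually.of_forall fun t => ?_)
  rw [Real.norm_eq_abs, abs_le, Pi.add_apply]
  constructor <;> nlinarith [sq_nonneg (deriv u t + f t * u t), sq_nonneg (deriv u t - f t * u t)]

lemma hasDerivAt_mul_sq {t a b : ℝ} (hf : HasDerivAt f a t) (hu : HasDerivAt u b t) :
    HasDerivAt (fun t => f t * u t ^ 2) (a * u t ^ 2 + f t * (2 * u t * b)) t :=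
  (hf.mul (hu.pow 2)).congr_deriv (by simp)

lemma integrable_deriv_mul_sq (hf : Continuous f) (hu : Continuous u)
    (hu' : Integrable (fun t => deriv u t ^ 2) μ)
    (hfu : Integrable (fun t => f t ^ 2 * u t ^ 2) μ)
    (hf'u : Integrable (fun t => f' t * u t ^ 2) μ) :
    Integrable (fun t => f' t * u t ^ 2 + f t * (2 * u t * deriv u t)) μ :=
  hf'u.add (integrable_mul_two_mul_mul_deriv hf hu hu' hfu)

lemma integrable_sq_deriv_add_mul_sq (hu' : Integrable (fun t => deriv u t ^ 2) μ)
    (hfu : Integrable (fun t => f t ^ 2 * u t ^ 2) μ)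
    (hf'u : Integrable (fun t => f' t * u t ^ 2) μ) :
    Integrable (fun t => deriv u t ^ 2 + (f t ^ 2 - f' t) * u t ^ 2) μ := by
  simp only [sub_mul]
  exact hu'.add (hfu.sub hf'u)

lemma integral_deriv_add_mul_sq (hf : Continuous f) (hu : Continuous u)
    (hu' : Integrable (fun t => deriv u t ^ 2) μ)
    (hfu : Integrable (fun t => f t ^ 2 * u t ^ 2) μ)
    (hf'u : Integrable (fun t => f' t * u t ^ 2) μ) :
    ∫ t, (deriv u t + f t * u t) ^ 2 ∂μ =
      (∫ t, (deriv u t ^ 2 + (f t ^ 2 - f' t) * u t ^ 2) ∂μ) +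
        ∫ t, (f' t * u t ^ 2 + f t * (2 * u t * deriv u t)) ∂μ := by
  rw [← integral_add (integrable_sq_deriv_add_mul_sq hu' hfu hf'u)
    (integrable_deriv_mul_sq hf hu hu' hfu hf'u)]
  congr with t
  ring

lemma integral_Ioi_deriv_add_mul_sq {a : ℝ} (hf : ∀ t, HasDerivAt f (f' t) t)
    (hu : Differentiable ℝ u) (hu2 : IntegrableOn (fun t => u t ^ 2) (Ioi a))
    (hu' : IntegrableOn (fun t => deriv u t ^ 2) (Ioi a))
    (hfu : IntegrableOn (fun t => f t ^ 2 * u t ^ 2) (Ioi a))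
    (hf'u : IntegrableOn (fun t => f' t * u t ^ 2) (Ioi a)) :
    ∫ t in Ioi a, (deriv u t + f t * u t) ^ 2 =
      (∫ t in Ioi a, (deriv u t ^ 2 + (f t ^ 2 - f' t) * u t ^ 2)) - f a * u a ^ 2 := by
  have hfc : Continuous f := continuous_iff_continuousAt.2 fun t => (hf t).continuousAt
  have hderiv (t : ℝ) := hasDerivAt_mul_sq (hf t) (hu t).hasDerivAt
  have hint := integrable_deriv_mul_sq hfc hu.continuous hu' hfu hf'u
  have hlim := tendsto_zero_of_hasDerivAt_of_integrableOn_Ioi (fun t _ => hderiv t) hint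
    (integrable_mul_sq hfc hu.continuous hu2 hfu)
  rw [integral_deriv_add_mul_sq hfc hu.continuous hu' hfu hf'u,
    integral_Ioi_of_hasDerivAt_of_tendsto' (fun t _ => hderiv t) hint hlim]
  ring

lemma integral_Iic_deriv_add_mul_sq {a : ℝ} (hf : ∀ t, HasDerivAt f (f' t) t)
    (hu : Differentiable ℝ u) (hu2 : IntegrableOn (fun t => u t ^ 2) (Iic a))
    (hu' : IntegrableOn (fun t => deriv u t ^ 2) (Iic a))
    (hfu : IntegrableOn (fun t => f t ^ 2 * u t ^ 2) (Iic a))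
    (hf'u : IntegrableOn (fun t => f' t * u t ^ 2) (Iic a)) :
    ∫ t in Iic a, (deriv u t + f t * u t) ^ 2 =
      (∫ t in Iic a, (deriv u t ^ 2 + (f t ^ 2 - f' t) * u t ^ 2)) + f a * u a ^ 2 := by
  have hfc : Continuous f := continuous_iff_continuousAt.2 fun t => (hf t).continuousAt
  have hderiv (t : ℝ) := hasDerivAt_mul_sq (hf t) (hu t).hasDerivAt
  have hint := integrable_deriv_mul_sq hfc hu.continuous hu' hfu hf'u
  have hlim := tendsto_zero_of_hasDerivAt_of_integrableOn_Iic (fun t _ => hderiv t) hint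
    (integrable_mul_sq hfc hu.continuous hu2 hfu)
  rw [integral_deriv_add_mul_sq hfc hu.continuous hu' hfu hf'u,
    integral_Iic_of_hasDerivAt_of_tendsto' (fun t _ => hderiv t) hint hlim, sub_zero]

end CompletingTheSquare

/-- The oscillator energy `∫_s (u'² + (t - ξ)² u²)` of `u` on `s`. -/
def oscEnergy (s : Set ℝ) (ξ : ℝ) (u : ℝ → ℝ) : ℝ :=
  ∫ t in s, (deriv u t ^ 2 + (t - ξ) ^ 2 * u t ^ 2)

/-- The squared `L²(ℝ₋)` norm, the counterpart of `np`. -/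
def massNeg (u : ℝ → ℝ) : ℝ := ∫ t in Iio (0 : ℝ), u t ^ 2

lemma oscEnergy_nonneg (s : Set ℝ) (ξ : ℝ) (u : ℝ → ℝ) : 0 ≤ oscEnergy s ξ u :=
  integral_nonneg fun t => by positivity

lemma np_nonneg (u : ℝ → ℝ) : 0 ≤ np u := integral_nonneg fun t => sq_nonneg (u t)

lemma massNeg_nonneg (u : ℝ → ℝ) : 0 ≤ massNeg u := integral_nonneg fun t => sq_nonneg (u t)

lemma nR_nonneg (u : ℝ → ℝ) : 0 ≤ nR u := integral_nonneg fun t => sq_nonneg (u t)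

lemma qRobin_zero_left (ξ : ℝ) (u : ℝ → ℝ) : qRobin 0 ξ u = oscEnergy (Ioi 0) ξ u := by
  simp [qRobin, oscEnergy]

section Energy

variable {u : ℝ → ℝ}

lemma integrable_oscEnergy {μ : Measure ℝ} (hu : Continuous u)
    (hu2 : Integrable (fun t => u t ^ 2) μ) (hu' : Integrable (fun t => deriv u t ^ 2) μ)
    (htu : Integrable (fun t => t ^ 2 * u t ^ 2) μ) (ξ : ℝ) :
    Integrable (fun t => deriv u t ^ 2 + (t - ξ) ^ 2 * u t ^ 2) μ :=
  hu'.add (integrable_sub_sq_mul_sq_of_sq_mul_sq hu hu2 htu ξ)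

lemma MemB1.memB1p (hu : MemB1 u) : MemB1p u :=
  ⟨hu.1, hu.2.1.integrableOn, hu.2.2.1.integrableOn, hu.2.2.2.integrableOn⟩

lemma MemB1.nR_eq (hu : MemB1 u) : nR u = np u + massNeg u := by
  rw [nR, np, massNeg, ← integral_Iic_eq_integral_Iio, add_comm,
    intervalIntegral.integral_Iic_add_Ioi hu.2.1.integrableOn hu.2.1.integrableOn]

lemma MemB1.QI_eq (hu : MemB1 u) (a m α ξ : ℝ) :
    QI a m α ξ u = oscEnergy (Ioi 0) ξ u - α * np u +
      (1 / m * oscEnergy (Iio 0) ξ u + a * α * massNeg u) := by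
  have hE := integrable_oscEnergy hu.1.continuous hu.2.1 hu.2.2.1 hu.2.2.2 ξ
  have hu2 := hu.2.1
  unfold QI oscEnergy np massNeg
  rw [integral_sub hE.integrableOn (hu2.integrableOn.const_mul _),
    integral_add (hE.integrableOn.const_mul _) (hu2.integrableOn.const_mul _)]
  simp only [integral_const_mul]

lemma integral_sq_deriv_add_sub_one_mul_sq {s : Set ℝ} (hu : Continuous u)
    (hu2 : IntegrableOn (fun t => u t ^ 2) s) (hu' : IntegrableOn (fun t => deriv u t ^ 2) s)
    (htu : IntegrableOn (fun t => t ^ 2 * u t ^ 2) s) (ξ : ℝ) :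
    ∫ t in s, (deriv u t ^ 2 + ((t - ξ) ^ 2 - 1) * u t ^ 2) =
      oscEnergy s ξ u - ∫ t in s, u t ^ 2 := by
  rw [oscEnergy, ← integral_sub (integrable_oscEnergy hu hu2 hu' htu ξ) hu2]
  congr with t
  ring

lemma MemB1p.oscEnergy_Ioi_eq (hu : MemB1p u) (ξ : ℝ) :
    oscEnergy (Ioi 0) ξ u =
      (∫ t in Ioi 0, (deriv u t + (t - ξ) * u t) ^ 2) + np u - ξ * u 0 ^ 2 := by
  obtain ⟨hd, hu2, hu', htu⟩ := hu
  have hsq := integral_Ioi_deriv_add_mul_sq (fun t => (hasDerivAt_id t).sub_const ξ) hd hu2 hu'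
    (integrable_sub_sq_mul_sq_of_sq_mul_sq hd.continuous hu2 htu ξ)
    (by simpa only [one_mul] using hu2)
  simp only [id_eq, integral_sq_deriv_add_sub_one_mul_sq hd.continuous hu2 hu' htu] at hsq
  rw [np]
  linarith

lemma MemB1.oscEnergy_Iio_eq (hu : MemB1 u) (ξ : ℝ) :
    oscEnergy (Iio 0) ξ u =
      (∫ t in Iio 0, (deriv u t + (t - ξ) * u t) ^ 2) + massNeg u + ξ * u 0 ^ 2 := by
  obtain ⟨hd, hu2, hu', htu⟩ := hu
  have hsq := integral_Iic_deriv_add_mul_sq (a := 0) (fun t => (hasDerivAt_id t).sub_const ξ) hd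
    hu2.integrableOn hu'.integrableOn
    (integrable_sub_sq_mul_sq_of_sq_mul_sq hd.continuous hu2 htu ξ).integrableOn
    (by simpa only [one_mul] using hu2.integrableOn)
  simp only [id_eq, integral_Iic_eq_integral_Iio] at hsq
  rw [integral_sq_deriv_add_sub_one_mul_sq hd.continuous hu2.integrableOn hu'.integrableOn
    htu.integrableOn] at hsq
  rw [massNeg]
  linarith

lemma MemB1.nR_le_oscEnergy_add (hu : MemB1 u) (ξ : ℝ) :
    nR u ≤ oscEnergy (Ioi 0) ξ u + oscEnergy (Iio 0) ξ u := by
  rw [hu.memB1p.oscEnergy_Ioi_eq, hu.oscEnergy_Iio_eq, hu.nR_eq]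
  have hpos : 0 ≤ ∫ t in Ioi 0, (deriv u t + (t - ξ) * u t) ^ 2 :=
    integral_nonneg fun t => sq_nonneg _
  have hneg : 0 ≤ ∫ t in Iio 0, (deriv u t + (t - ξ) * u t) ^ 2 :=
    integral_nonneg fun t => sq_nonneg _
  linarith

lemma MemB1p.mul_np_le_oscEnergy_of_riccati {f f' : ℝ → ℝ} {c ξ : ℝ} (hu : MemB1p u)
    (hf : ∀ t, HasDerivAt f (f' t) t)
    (hfu : IntegrableOn (fun t => f t ^ 2 * u t ^ 2) (Ioi 0))
    (hf'u : IntegrableOn (fun t => f' t * u t ^ 2) (Ioi 0)) (hf0 : 0 ≤ f 0)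
    (hc : ∀ t, f t ^ 2 - f' t + c ≤ (t - ξ) ^ 2) :
    c * np u ≤ oscEnergy (Ioi 0) ξ u := by
  obtain ⟨hd, hu2, hu', htu⟩ := hu
  have hint := integrable_sq_deriv_add_mul_sq hu' hfu hf'u
  have hsq := integral_Ioi_deriv_add_mul_sq hf hd hu2 hu' hfu hf'u
  have hsq_nonneg : 0 ≤ ∫ t in Ioi 0, (deriv u t + f t * u t) ^ 2 :=
    integral_nonneg fun t => sq_nonneg _
  have hmono : (∫ t in Ioi 0, (deriv u t ^ 2 + (f t ^ 2 - f' t) * u t ^ 2)) + c * np u ≤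
      oscEnergy (Ioi 0) ξ u := by
    rw [np, ← integral_const_mul, ← integral_add hint (hu2.const_mul c)]
    refine integral_mono (hint.add (hu2.const_mul c))
      (integrable_oscEnergy hd.continuous hu2 hu' htu ξ) fun t => ?_
    change deriv u t ^ 2 + (f t ^ 2 - f' t) * u t ^ 2 + c * u t ^ 2 ≤
      deriv u t ^ 2 + (t - ξ) ^ 2 * u t ^ 2
    linarith [mul_le_mul_of_nonneg_right (hc t) (sq_nonneg (u t))]
  linarith [mul_nonneg hf0 (sq_nonneg (u 0))]

/-- The multiplier completing the square in the uniform Neumann bound, as a function of `t - ξ`.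
Being nonnegative everywhere, it has a boundary term of the right sign whatever `ξ` is; the factor
`1 / 32` keeps its values below `1 / 8`. -/
def neumannMultiplier (x : ℝ) : ℝ := (Real.arctan x + Real.pi / 2) / 32

lemma hasDerivAt_neumannMultiplier (x : ℝ) :
    HasDerivAt neumannMultiplier (1 / (1 + x ^ 2) / 32) x :=
  ((Real.hasDerivAt_arctan x).add_const (Real.pi / 2)).div_const 32

lemma continuous_neumannMultiplier : Continuous neumannMultiplier :=
  continuous_iff_continuousAt.2 fun x => (hasDerivAt_neumannMultiplier x).continuousAt

lemma neumannMultiplier_nonneg (x : ℝ) : 0 ≤ neumannMultiplier x :=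
  div_nonneg (by linarith [Real.neg_pi_div_two_lt_arctan x]) (by norm_num)

lemma neumannMultiplier_sq_le (x : ℝ) : neumannMultiplier x ^ 2 ≤ 1 / 64 := by
  have hle : neumannMultiplier x ≤ 1 / 8 := by
    rw [neumannMultiplier]
    linarith [Real.arctan_lt_pi_div_two x, Real.pi_lt_four]
  calc neumannMultiplier x ^ 2
      ≤ (1 / 8) ^ 2 := pow_le_pow_left₀ (neumannMultiplier_nonneg x) hle 2
    _ = 1 / 64 := by norm_num

lemma neumannMultiplier_riccati (x : ℝ) :
    neumannMultiplier x ^ 2 - 1 / (1 + x ^ 2) / 32 + 1 / 64 ≤ x ^ 2 := by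
  have hderiv : 1 - x ^ 2 ≤ 1 / (1 + x ^ 2) := by
    rw [le_div_iff₀ (by positivity)]
    nlinarith [sq_nonneg (x ^ 2)]
  linarith [neumannMultiplier_sq_le x, sq_nonneg x]

lemma MemB1p.one_div_mul_np_le_oscEnergy (hu : MemB1p u) (ξ : ℝ) :
    1 / 64 * np u ≤ oscEnergy (Ioi 0) ξ u := by
  have hcont : Continuous fun t => neumannMultiplier (t - ξ) :=
    continuous_neumannMultiplier.comp (continuous_sub_right ξ)
  have hcont' : Continuous fun t : ℝ => 1 / (1 + (t - ξ) ^ 2) / 32 := by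
    have (t : ℝ) : 1 + (t - ξ) ^ 2 ≠ 0 := by positivity
    fun_prop (disch := assumption)
  refine hu.mul_np_le_oscEnergy_of_riccati
    (fun t => (hasDerivAt_neumannMultiplier (t - ξ)).comp_sub_const t ξ)
    (hu.2.1.bdd_mul (c := 1 / 64) (hcont.pow 2).aestronglyMeasurable
      (Eventually.of_forall fun t => ?_))
    (hu.2.1.bdd_mul (c := 1) hcont'.aestronglyMeasurable (Eventually.of_forall fun t => ?_))
    (neumannMultiplier_nonneg _) fun t => neumannMultiplier_riccati (t - ξ)
  · rw [Real.norm_of_nonneg (sq_nonneg _)]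
    exact neumannMultiplier_sq_le (t - ξ)
  · rw [Real.norm_of_nonneg (by positivity), div_div]
    exact div_le_one_of_le₀ (by linarith [sq_nonneg (t - ξ)]) (by positivity)

end Energy

/-- The Gaussian centred at `ξ`, ground state of the oscillator `-d²/dt² + (t - ξ)²` on `ℝ`,
used as trial function. -/
def oscGaussian (ξ t : ℝ) : ℝ := Real.exp (-(t - ξ) ^ 2 / 2)

lemma oscGaussian_sq (ξ t : ℝ) : oscGaussian ξ t ^ 2 = Real.exp (-1 * (t - ξ) ^ 2) := by
  rw [oscGaussian, ← Real.exp_nat_mul]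
  congr 1
  push_cast
  ring

lemma hasDerivAt_oscGaussian (ξ t : ℝ) :
    HasDerivAt (oscGaussian ξ) (-(t - ξ) * oscGaussian ξ t) t :=
  ((((hasDerivAt_id t).sub_const ξ).pow 2).neg.div_const 2).exp.congr_deriv
    (by
      simp only [oscGaussian, id_eq, mul_one, Nat.cast_ofNat, Pi.pow_apply, Pi.neg_apply]
      ring)

lemma deriv_oscGaussian (ξ t : ℝ) : deriv (oscGaussian ξ) t = -(t - ξ) * oscGaussian ξ t :=
  (hasDerivAt_oscGaussian ξ t).deriv

lemma deriv_oscGaussian_add_mul (ξ t : ℝ) :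
    deriv (oscGaussian ξ) t + (t - ξ) * oscGaussian ξ t = 0 := by
  rw [deriv_oscGaussian]
  ring

lemma memB1_oscGaussian (ξ : ℝ) : MemB1 (oscGaussian ξ) := by
  have hd : Differentiable ℝ (oscGaussian ξ) := fun t =>
    (hasDerivAt_oscGaussian ξ t).differentiableAt
  have hsq : Integrable (fun t => oscGaussian ξ t ^ 2) := by
    simp_rw [oscGaussian_sq]
    exact (integrable_exp_neg_mul_sq one_pos).comp_sub_right ξ
  have hmoment : Integrable (fun t => (t - ξ) ^ 2 * oscGaussian ξ t ^ 2) := by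
    simp_rw [oscGaussian_sq]
    simpa using (integrable_rpow_mul_exp_neg_mul_sq one_pos (s := 2) (by norm_num)).comp_sub_right ξ
  refine ⟨hd, hsq, ?_, ?_⟩
  · simpa only [deriv_oscGaussian, mul_pow, neg_sq] using hmoment
  · simpa using integrable_sub_sq_mul_sq (η := 0) hd.continuous hsq hmoment

lemma nR_oscGaussian (ξ : ℝ) : nR (oscGaussian ξ) = √Real.pi := by
  simp_rw [nR, oscGaussian_sq]
  rw [integral_sub_right_eq_self (fun t => Real.exp (-1 * t ^ 2)) ξ, integral_gaussian, div_one]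

lemma nR_oscGaussian_pos (ξ : ℝ) : 0 < nR (oscGaussian ξ) := by
  rw [nR_oscGaussian]
  exact Real.sqrt_pos.2 Real.pi_pos

lemma np_oscGaussian_zero : np (oscGaussian 0) = √Real.pi / 2 := by
  simp_rw [np, oscGaussian_sq, sub_zero]
  rw [integral_gaussian_Ioi, div_one]

lemma oscEnergy_Ioi_oscGaussian (ξ : ℝ) :
    oscEnergy (Ioi 0) ξ (oscGaussian ξ) = np (oscGaussian ξ) - ξ * Real.exp (-ξ ^ 2) := by
  rw [(memB1_oscGaussian ξ).memB1p.oscEnergy_Ioi_eq, oscGaussian_sq]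
  simp [deriv_oscGaussian_add_mul]

lemma oscEnergy_Iio_oscGaussian (ξ : ℝ) :
    oscEnergy (Iio 0) ξ (oscGaussian ξ) = massNeg (oscGaussian ξ) + ξ * Real.exp (-ξ ^ 2) := by
  rw [(memB1_oscGaussian ξ).oscEnergy_Iio_eq, oscGaussian_sq]
  simp [deriv_oscGaussian_add_mul]

lemma QI_one_oscGaussian (a m ξ : ℝ) :
    QI a m 1 ξ (oscGaussian ξ) =
      (1 / m + a) * massNeg (oscGaussian ξ) - (1 - 1 / m) * (ξ * Real.exp (-ξ ^ 2)) := by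
  rw [(memB1_oscGaussian ξ).QI_eq, oscEnergy_Ioi_oscGaussian, oscEnergy_Iio_oscGaussian]
  ring

lemma massNeg_oscGaussian_le {ξ : ℝ} (hξ : 1 / 2 ≤ ξ) :
    massNeg (oscGaussian ξ) ≤ Real.exp (-ξ ^ 2) := by
  have hbound : IntegrableOn (fun t => Real.exp (-ξ ^ 2) * Real.exp t) (Iio 0) :=
    ((integrableOn_exp_Iic 0).mono_set Iio_subset_Iic_self).const_mul _
  calc massNeg (oscGaussian ξ)
      ≤ ∫ t in Iio (0 : ℝ), Real.exp (-ξ ^ 2) * Real.exp t := by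
        refine setIntegral_mono_on (memB1_oscGaussian ξ).2.1.integrableOn hbound
          measurableSet_Iio fun t (ht : t < 0) => ?_
        rw [oscGaussian_sq, ← Real.exp_add, Real.exp_le_exp]
        nlinarith [sq_nonneg t]
    _ = Real.exp (-ξ ^ 2) := by
        rw [← integral_Iic_eq_integral_Iio, integral_const_mul, integral_exp_Iic, Real.exp_zero,
          mul_one]

lemma tendsto_massNeg_oscGaussian :
    Tendsto (fun ξ => massNeg (oscGaussian ξ)) atTop (𝓝 0) := by
  have hexp : Tendsto (fun ξ : ℝ => Real.exp (-ξ ^ 2)) atTop (𝓝 0) := by simp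
  exact squeeze_zero' (Eventually.of_forall fun ξ => massNeg_nonneg _)
    ((eventually_ge_atTop (1 / 2)).mono fun ξ => massNeg_oscGaussian_le) hexp

lemma tendsto_QI_one_oscGaussian (a m : ℝ) :
    Tendsto (fun ξ => QI a m 1 ξ (oscGaussian ξ)) atTop (𝓝 0) := by
  have hmul_exp : Tendsto (fun ξ : ℝ => ξ * Real.exp (-ξ ^ 2)) atTop (𝓝 0) := by
    refine ((tendsto_rpow_abs_mul_exp_neg_mul_sq_cocompact one_pos 1).mono_left
      atTop_le_cocompact).congr' ?_
    filter_upwards [eventually_ge_atTop 0] with ξ hξ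
    rw [Real.rpow_one, abs_of_nonneg hξ, neg_one_mul]
  simpa only [QI_one_oscGaussian, mul_zero, sub_zero] using
    (tendsto_massNeg_oscGaussian.const_mul (1 / m + a)).sub (hmul_exp.const_mul (1 - 1 / m))

lemma exists_QI_one_oscGaussian_neg {a m : ℝ} (hm : 1 < m) :
    ∃ ξ, QI a m 1 ξ (oscGaussian ξ) < 0 := by
  have hgap : 0 < 1 - 1 / m := sub_pos.2 ((div_lt_one (one_pos.trans hm)).2 hm)
  obtain ⟨ξ, hξ, hlarge⟩ := ((eventually_ge_atTop (1 / 2)).and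
    ((tendsto_id.const_mul_atTop hgap).eventually_gt_atTop |1 / m + a|)).exists
  refine ⟨ξ, ?_⟩
  have hmass : (1 / m + a) * massNeg (oscGaussian ξ) ≤ |1 / m + a| * Real.exp (-ξ ^ 2) :=
    mul_le_mul (le_abs_self _) (massNeg_oscGaussian_le hξ) (massNeg_nonneg _) (abs_nonneg _)
  have hboundary : |1 / m + a| * Real.exp (-ξ ^ 2) < (1 - 1 / m) * ξ * Real.exp (-ξ ^ 2) :=
    mul_lt_mul_of_pos_right hlarge (Real.exp_pos _)
  rw [QI_one_oscGaussian]
  linarith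

lemma le_Theta0_iff {c : ℝ} :
    c ≤ Theta0 ↔ ∀ ξ u, MemB1p u → c * np u ≤ oscEnergy (Ioi 0) ξ u := by
  have hne : ∃ u, MemB1p u ∧ np u ≠ 0 := by
    refine ⟨oscGaussian 0, (memB1_oscGaussian 0).memB1p, ?_⟩
    rw [np_oscGaussian_zero]
    positivity
  simp only [← qRobin_zero_left]
  refine le_sInf_range_rayleighInf_iff (b := 0) np_nonneg hne fun ξ u _ => ?_
  rw [zero_mul, qRobin_zero_left]
  exact oscEnergy_nonneg _ ξ u

lemma Theta0_mul_np_le_oscEnergy (ξ : ℝ) {u : ℝ → ℝ} (hu : MemB1p u) :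
    Theta0 * np u ≤ oscEnergy (Ioi 0) ξ u :=
  le_Theta0_iff.1 le_rfl ξ u hu

lemma Theta0_pos : 0 < Theta0 :=
  lt_of_lt_of_le (by norm_num) (le_Theta0_iff.2 fun ξ _ hu => hu.one_div_mul_np_le_oscEnergy ξ)

lemma Theta0_lt_one : Theta0 < 1 := by
  by_contra! h
  have hle := Theta0_mul_np_le_oscEnergy 1 (memB1_oscGaussian 1).memB1p
  rw [oscEnergy_Ioi_oscGaussian] at hle
  linarith [le_mul_of_one_le_left (np_nonneg (oscGaussian 1)) h, Real.exp_pos (-1 ^ 2)]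

/-- The infimum over `ξ` of the ground state energies `μ₁(a,m,α;ξ)`. -/
def infMu1 (a m α : ℝ) : ℝ := sInf (range (mu1 a m α))

section InfMu1

variable {a m α : ℝ}

lemma neg_mul_nR_le_QI (hm : 0 ≤ m) (ξ : ℝ) {u : ℝ → ℝ} (hu : MemB1 u) :
    -(|α| * (1 + |a|)) * nR u ≤ QI a m α ξ u := by
  rw [hu.QI_eq, hu.nR_eq]
  have hp := np_nonneg u
  have hn := massNeg_nonneg u
  have hEpos := oscEnergy_nonneg (Ioi 0) ξ u
  have hEneg : 0 ≤ 1 / m * oscEnergy (Iio 0) ξ u :=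
    mul_nonneg (by positivity) (oscEnergy_nonneg _ ξ u)
  have hmass_pos : α * np u ≤ |α| * np u := mul_le_mul_of_nonneg_right (le_abs_self α) hp
  have hmass_neg : -(|a| * |α|) * massNeg u ≤ a * α * massNeg u :=
    mul_le_mul_of_nonneg_right (abs_mul a α ▸ neg_abs_le (a * α)) hn
  have hcross_pos : 0 ≤ |α| * |a| * np u := by positivity
  have hcross_neg : 0 ≤ |α| * massNeg u := by positivity
  linarith

lemma le_infMu1_iff (hm : 0 ≤ m) {c : ℝ} :
    c ≤ infMu1 a m α ↔ ∀ ξ u, MemB1 u → c * nR u ≤ QI a m α ξ u :=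
  le_sInf_range_rayleighInf_iff nR_nonneg
    ⟨oscGaussian 0, memB1_oscGaussian 0, (nR_oscGaussian_pos 0).ne'⟩
    fun ξ _ hu => neg_mul_nR_le_QI hm ξ hu

lemma infMu1_mul_nR_le_QI (hm : 0 ≤ m) (ξ : ℝ) {u : ℝ → ℝ} (hu : MemB1 u) :
    infMu1 a m α * nR u ≤ QI a m α ξ u :=
  (le_infMu1_iff hm).1 le_rfl ξ u hu

lemma concaveOn_infMu1 (hm : 0 ≤ m) : ConcaveOn ℝ univ (infMu1 a m) := by
  refine ⟨convex_univ, fun α _ β _ p q hp hq hpq => (le_infMu1_iff hm).2 fun ξ u hu => ?_⟩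
  have hα := mul_le_mul_of_nonneg_left (infMu1_mul_nR_le_QI (a := a) (α := α) hm ξ hu) hp
  have hβ := mul_le_mul_of_nonneg_left (infMu1_mul_nR_le_QI (a := a) (α := β) hm ξ hu) hq
  have haffine : QI a m (p • α + q • β) ξ u = p * QI a m α ξ u + q * QI a m β ξ u := by
    simp only [hu.QI_eq, smul_eq_mul]
    linear_combination
      (-(oscEnergy (Ioi 0) ξ u) - 1 / m * oscEnergy (Iio 0) ξ u) * hpq
  rw [haffine, smul_eq_mul, smul_eq_mul]
  linarith

lemma infMu1_zero_pos (hm : 0 < m) : 0 < infMu1 a m 0 := by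
  refine lt_of_lt_of_le (by positivity : 0 < min 1 (1 / m))
    ((le_infMu1_iff hm.le).2 fun ξ u hu => ?_)
  calc min 1 (1 / m) * nR u
      ≤ min 1 (1 / m) * oscEnergy (Ioi 0) ξ u + min 1 (1 / m) * oscEnergy (Iio 0) ξ u := by
        rw [← mul_add]
        exact mul_le_mul_of_nonneg_left (hu.nR_le_oscEnergy_add ξ) (by positivity)
    _ ≤ 1 * oscEnergy (Ioi 0) ξ u + 1 / m * oscEnergy (Iio 0) ξ u :=
        add_le_add
          (mul_le_mul_of_nonneg_right (min_le_left _ _) (oscEnergy_nonneg _ ξ u))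
          (mul_le_mul_of_nonneg_right (min_le_right _ _) (oscEnergy_nonneg _ ξ u))
    _ = QI a m 0 ξ u := by rw [hu.QI_eq]; ring

lemma eq_of_infMu1_eq_zero {β : ℝ} (hm : 0 < m) (hα : 0 < α) (hβ : 0 < β)
    (hα0 : infMu1 a m α = 0) (hβ0 : infMu1 a m β = 0) : α = β :=
  eq_of_concaveOn_of_eq_zero ((concaveOn_infMu1 hm.le).subset (subset_univ _) (convex_Ici 0))
    (infMu1_zero_pos hm) hα hβ hα0 hβ0

lemma infMu1_one_nonpos (hm : 0 ≤ m) : infMu1 a m 1 ≤ 0 := by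
  have hle : infMu1 a m 1 * √Real.pi ≤ 0 :=
    ge_of_tendsto' (tendsto_QI_one_oscGaussian a m) fun ξ =>
      nR_oscGaussian ξ ▸ infMu1_mul_nR_le_QI hm ξ (memB1_oscGaussian ξ)
  exact nonpos_of_mul_nonpos_left hle (Real.sqrt_pos.2 Real.pi_pos)

lemma infMu1_one_neg (hm : 1 < m) : infMu1 a m 1 < 0 := by
  obtain ⟨ξ, hξ⟩ := exists_QI_one_oscGaussian_neg (a := a) hm
  have hle : infMu1 a m 1 * nR (oscGaussian ξ) ≤ QI a m 1 ξ (oscGaussian ξ) :=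
    infMu1_mul_nR_le_QI (one_pos.trans hm).le ξ (memB1_oscGaussian ξ)
  exact neg_of_mul_neg_left (hle.trans_lt hξ) (nR_oscGaussian_pos ξ).le

lemma infMu1_one_nonneg (hm : 0 < m) (hm1 : m ≤ 1) (ha : -1 ≤ a) : 0 ≤ infMu1 a m 1 := by
  refine (le_infMu1_iff hm.le).2 fun ξ u hu => ?_
  have hosc := hu.nR_le_oscEnergy_add ξ
  have hEneg : oscEnergy (Iio 0) ξ u ≤ 1 / m * oscEnergy (Iio 0) ξ u :=
    le_mul_of_one_le_left (oscEnergy_nonneg _ ξ u) (one_le_one_div hm hm1)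
  have hmass : -1 * massNeg u ≤ a * massNeg u :=
    mul_le_mul_of_nonneg_right ha (massNeg_nonneg u)
  rw [hu.nR_eq] at hosc
  rw [hu.QI_eq]
  linarith

lemma infMu1_Theta0_pos (hm : 1 < m) (ha : -(1 / m) ≤ a) : 0 < infMu1 a m Theta0 := by
  have hm0 : 0 < m := one_pos.trans hm
  have hgap : 0 < 1 - Theta0 := sub_pos.2 Theta0_lt_one
  have hm1 : 0 ≤ 1 - 1 / m := sub_nonneg.2 ((div_lt_one hm0).2 hm).le
  refine lt_of_lt_of_le (by positivity : 0 < 1 / m * (1 - Theta0))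
    ((le_infMu1_iff hm0.le).2 fun ξ u hu => ?_)
  have hneumann := mul_le_mul_of_nonneg_left (Theta0_mul_np_le_oscEnergy ξ hu.memB1p) hm1
  have hosc := mul_le_mul_of_nonneg_left (hu.nR_le_oscEnergy_add ξ)
    (one_div_nonneg.2 hm0.le)
  have hmass : -(1 / m) * (Theta0 * massNeg u) ≤ a * (Theta0 * massNeg u) :=
    mul_le_mul_of_nonneg_right ha (mul_nonneg Theta0_pos.le (massNeg_nonneg u))
  rw [hu.nR_eq] at hosc ⊢
  rw [hu.QI_eq]
  linarith

lemma exists_infMu1_eq_zero (hm : 1 < m) (ha : -(1 / m) ≤ a) :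
    ∃ α ∈ Ioo Theta0 1, infMu1 a m α = 0 := by
  have hcont : ContinuousOn (infMu1 a m) univ :=
    (concaveOn_infMu1 (one_pos.trans hm).le).continuousOn isOpen_univ
  exact intermediate_value_Ioo' Theta0_lt_one.le (hcont.mono (subset_univ _))
    ⟨infMu1_one_neg hm, infMu1_Theta0_pos hm ha⟩

end InfMu1

theorem exists_unique_alpha_general (a m : ℝ) (ha : -min 1 (1 / m) ≤ a) (hm : 0 < m) :
    Theta0 ∈ Ioo (0:ℝ) 1 ∧
    (∃! α : ℝ, 0 < α ∧ sInf (Set.range (mu1 a m α)) = 0) ∧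
    ∀ α : ℝ, 0 < α → sInf (Set.range (mu1 a m α)) = 0 →
      (m ≤ 1 → α = 1) ∧ (1 < m → α ∈ Ioo Theta0 1) := by
  have hzero : ∃ α, 0 < α ∧ infMu1 a m α = 0 ∧
      (m ≤ 1 → α = 1) ∧ (1 < m → α ∈ Ioo Theta0 1) := by
    rcases le_or_gt m 1 with hm1 | hm1
    · have ha1 : -1 ≤ a := (neg_le_neg (min_le_left _ _)).trans ha
      exact ⟨1, one_pos, (infMu1_one_nonpos hm.le).antisymm (infMu1_one_nonneg hm hm1 ha1),
        fun _ => rfl, fun h => absurd h hm1.not_gt⟩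
    · have ham : -(1 / m) ≤ a := (neg_le_neg (min_le_right _ _)).trans ha
      obtain ⟨α, hα, hα0⟩ := exists_infMu1_eq_zero hm1 ham
      exact ⟨α, Theta0_pos.trans hα.1, hα0, fun h => absurd h hm1.not_ge, fun _ => hα⟩
  obtain ⟨α, hα, hα0, hlocation⟩ := hzero
  have hunique (β : ℝ) (hβ : 0 < β) (hβ0 : infMu1 a m β = 0) : β = α :=
    eq_of_infMu1_eq_zero hm hβ hα hβ0 hα0
  exact ⟨⟨Theta0_pos, Theta0_lt_one⟩, ⟨α, ⟨hα, hα0⟩, fun β hβ => hunique β hβ.1 hβ.2⟩,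
    fun β hβ hβ0 => hunique β hβ hβ0 ▸ hlocation⟩

/-- `Θ₀ ∈ (0,1)`; for each `a, m > 0` there is a unique `α(a,m) > 0`
with `inf_ξ μ₁(a,m,α(a,m);ξ) = 0`, it equals `1` if `m ≤ 1`, and lies in
`(Θ₀, 1)` if `m > 1`. -/
theorem exists_unique_alpha (a m : ℝ) (ha : 0 < a) (hm : 0 < m) :
    Theta0 ∈ Ioo (0:ℝ) 1 ∧
    (∃! α : ℝ, 0 < α ∧ sInf (Set.range (mu1 a m α)) = 0) ∧
    ∀ α : ℝ, 0 < α → sInf (Set.range (mu1 a m α)) = 0 →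
      (m ≤ 1 → α = 1) ∧ (1 < m → α ∈ Ioo Theta0 1) :=
  exists_unique_alpha_general a m
    ((neg_nonpos.2 (le_min zero_le_one (one_div_nonneg.2 hm.le))).trans ha.le) hm
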